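/- arXiv:1307.3066 — 4 statements merged into one kernel-verified Lean document; each statement's English description precedes it below -/
import Mathlib

section
/- Let Q be a finite quiver and θ a stability condition with θ(𝟙) = 0. For a subset J ⊆ Q₁ the following hold: (1) there exists a θ-semistable representation M of (Q,𝟙) over k with Supp(M) = J if and only if θ(𝟙_{I'}) ≥ 0 for every nonempty I' ∈ S(J); (2) there exists a θ-stable representation M of (Q,𝟙) over k with Supp(M) = J if and only if θ(𝟙_{I'}) > 0 for every nonempty proper subset I' ∈ S(J). -/
open scoped Classical

/-- The indicator vector 𝟙_{I'} of a subset of the vertices. -/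
noncomputable def indVec {Q₀ : Type} (I' : Set Q₀) : Q₀ → ℤ :=
  fun i => if i ∈ I' then 1 else 0

/-- `S(J)`: the set of subsets `I' ⊆ Q₀` such that every arrow `α ∈ J` with
source in `I'` has target in `I'`. -/
def SsetOf {Q₀ Q₁ : Type} (src tgt : Q₁ → Q₀) (J : Set Q₁) : Set (Set Q₀) :=
  {I' | ∀ α ∈ J, src α ∈ I' → tgt α ∈ I'}

/-- A representation of `(Q,𝟙)` over `k` is a tuple `M : Q₁ → k`.  It is
`θ`-semistable if `θ(𝟙_{I'}) ≥ 0` for every subrepresentation, where a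
subrepresentation is a tuple of subspaces `V'_i ⊆ k` with `M_α · V'_i ⊆ V'_j`
for every arrow `α : i → j`, and `I' = {i : V'_i = k}`. -/
def IsSemistableRep {k : Type} [Field k] {Q₀ Q₁ : Type} (src tgt : Q₁ → Q₀)
    (θ : (Q₀ → ℤ) →ₗ[ℤ] ℤ) (M : Q₁ → k) : Prop :=
  ∀ V' : Q₀ → Submodule k k,
    (∀ α : Q₁, ∀ v ∈ V' (src α), M α • v ∈ V' (tgt α)) →
      0 ≤ θ (indVec {i | V' i = ⊤})

/-- A `θ`-semistable representation is `θ`-stable if moreover `θ(𝟙_{I'}) > 0`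
for every subrepresentation with `∅ ≠ I' ≠ Q₀`. -/
def IsStableRep {k : Type} [Field k] {Q₀ Q₁ : Type} (src tgt : Q₁ → Q₀)
    (θ : (Q₀ → ℤ) →ₗ[ℤ] ℤ) (M : Q₁ → k) : Prop :=
  IsSemistableRep src tgt θ M ∧
    ∀ V' : Q₀ → Submodule k k,
      (∀ α : Q₁, ∀ v ∈ V' (src α), M α • v ∈ V' (tgt α)) →
        {i | V' i = ⊤}.Nonempty → {i | V' i = ⊤} ≠ Set.univ →
          0 < θ (indVec {i | V' i = ⊤})

/-! Since every nonzero scalar is invertible, the sets of vertices on which a subrepresentation of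
`M` is all of `k` are exactly the members of `S(Supp M)`. Hence (semi)stability of `M` depends only
on `Supp M`, and every `J ⊆ Q₁` is the support of a representation. -/

section Subrepresentation

variable {k : Type*} {Q₀ Q₁ : Type} {src tgt : Q₁ → Q₀} {M : Q₁ → k}

/-- The family `V'` of subspaces of `k` is a subrepresentation of the representation `M` of `(Q,𝟙)`.
The quiver is encoded by its source and target maps. -/
def IsSubrep [Semiring k] (src tgt : Q₁ → Q₀) (M : Q₁ → k) (V' : Q₀ → Submodule k k) : Prop :=
  ∀ α : Q₁, ∀ v ∈ V' (src α), M α • v ∈ V' (tgt α)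

theorem IsSubrep.setOfPred_eq_top_mem_SsetOf [DivisionSemiring k] {V' : Q₀ → Submodule k k}
    (hV' : IsSubrep src tgt M V') :
    {i | V' i = ⊤} ∈ SsetOf src tgt (Function.support M) := by
  intro α hα (hsrc : V' (src α) = ⊤)
  refine Submodule.eq_top_iff'.2 fun x => ?_
  have hx : M α • (M α)⁻¹ • x ∈ V' (tgt α) := hV' α _ (hsrc ▸ Submodule.mem_top)
  rwa [smul_inv_smul₀ hα] at hx

theorem isSubrep_ite_top_bot [Semiring k] {I' : Set Q₀}
    (hI' : I' ∈ SsetOf src tgt (Function.support M)) :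
    IsSubrep src tgt M fun i => if i ∈ I' then ⊤ else ⊥ := by
  intro α v hv
  by_cases hα : M α = 0
  · simp only [hα, zero_smul, zero_mem]
  by_cases hsrc : src α ∈ I'
  · simp only [hI' α hα hsrc, if_true, Submodule.mem_top]
  · obtain rfl : v = 0 := by simpa only [hsrc, if_false, Submodule.mem_bot] using hv
    simp only [smul_zero, zero_mem]

theorem setOfPred_ite_top_bot_eq_top {ι β : Type*} [PartialOrder β] [BoundedOrder β] [Nontrivial β]
    (s : Set ι) : {i | (if i ∈ s then (⊤ : β) else ⊥) = ⊤} = s := by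
  ext i
  simp

theorem forall_isSubrep_iff_forall_mem_SsetOf [DivisionSemiring k] {P : Set Q₀ → Prop} :
    (∀ V', IsSubrep src tgt M V' → P {i | V' i = ⊤}) ↔
      ∀ I' ∈ SsetOf src tgt (Function.support M), P I' where
  mp h I' hI' :=
    setOfPred_ite_top_bot_eq_top (β := Submodule k k) I' ▸ h _ (isSubrep_ite_top_bot hI')
  mpr h _ hV' := h _ hV'.setOfPred_eq_top_mem_SsetOf

end Subrepresentation

section Stability

variable {k : Type} [Field k] {Q₀ Q₁ : Type} {src tgt : Q₁ → Q₀} {θ : (Q₀ → ℤ) →ₗ[ℤ] ℤ}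
  {M : Q₁ → k}

theorem indVec_empty : indVec (∅ : Set Q₀) = 0 := by
  ext i
  simp [indVec]

theorem indVec_univ : indVec (Set.univ : Set Q₀) = fun _ => 1 := by
  ext i
  simp [indVec]

theorem isSemistableRep_iff : IsSemistableRep src tgt θ M ↔
    ∀ I' ∈ SsetOf src tgt (Function.support M), I'.Nonempty → 0 ≤ θ (indVec I') := by
  refine (forall_isSubrep_iff_forall_mem_SsetOf (P := fun I' => 0 ≤ θ (indVec I'))).trans
    (forall₂_congr fun I' _ => ⟨fun h _ => h, fun h => ?_⟩)
  obtain rfl | hne := I'.eq_empty_or_nonempty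
  · rw [indVec_empty, map_zero]
  · exact h hne

theorem isStableRep_iff (hθ : 0 ≤ θ fun _ => 1) : IsStableRep src tgt θ M ↔
    ∀ I' ∈ SsetOf src tgt (Function.support M), I'.Nonempty → I' ≠ Set.univ →
      0 < θ (indVec I') := by
  have hpos := forall_isSubrep_iff_forall_mem_SsetOf (src := src) (tgt := tgt) (M := M)
    (P := fun I' => I'.Nonempty → I' ≠ Set.univ → 0 < θ (indVec I'))
  refine ⟨fun h => hpos.1 h.2, fun h => ⟨isSemistableRep_iff.2 fun I' hI' hne => ?_, hpos.2 h⟩⟩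
  obtain rfl | hproper := eq_or_ne I' Set.univ
  · rwa [indVec_univ]
  · exact (h I' hI' hne hproper).le

end Stability

theorem exists_support_eq {α : Type*} (β : Type*) [Zero β] [Nontrivial β] (s : Set α) :
    ∃ f : α → β, Function.support f = s := by
  obtain ⟨b, hb⟩ := exists_ne (0 : β)
  exact ⟨s.indicator fun _ => b, by
    rw [Set.support_indicator, Function.support_const hb, Set.inter_univ]⟩

theorem stmt0_general {k : Type} [Field k] {Q₀ Q₁ : Type} (src tgt : Q₁ → Q₀)
    (θ : (Q₀ → ℤ) →ₗ[ℤ] ℤ) (hθ : 0 ≤ θ (fun _ => 1)) (J : Set Q₁) :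
    ((∃ M : Q₁ → k, {α | M α ≠ 0} = J ∧ IsSemistableRep src tgt θ M) ↔
      ∀ I' ∈ SsetOf src tgt J, I'.Nonempty → 0 ≤ θ (indVec I')) ∧
    ((∃ M : Q₁ → k, {α | M α ≠ 0} = J ∧ IsStableRep src tgt θ M) ↔
      ∀ I' ∈ SsetOf src tgt J, I'.Nonempty → I' ≠ Set.univ → 0 < θ (indVec I')) := by
  obtain ⟨M, rfl⟩ := exists_support_eq k J
  constructor
  · exact ⟨fun ⟨_, hsupp, hM'⟩ => hsupp ▸ isSemistableRep_iff.1 hM',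
      fun h => ⟨M, rfl, isSemistableRep_iff.2 h⟩⟩
  · exact ⟨fun ⟨_, hsupp, hM'⟩ => hsupp ▸ (isStableRep_iff hθ).1 hM',
      fun h => ⟨M, rfl, (isStableRep_iff hθ).2 h⟩⟩

/-- Existence of a `θ`-semistable (resp. `θ`-stable)
representation of `(Q,𝟙)` over `k` with support `J`, characterized via `S(J)`. -/
theorem stmt0 {k : Type} [Field k] {Q₀ Q₁ : Type} [Fintype Q₀] [Fintype Q₁]
    (src tgt : Q₁ → Q₀) (θ : (Q₀ → ℤ) →ₗ[ℤ] ℤ)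
    (hθ : θ (fun _ => 1) = 0) (J : Set Q₁) :
    ((∃ M : Q₁ → k, {α | M α ≠ 0} = J ∧ IsSemistableRep src tgt θ M) ↔
      ∀ I' ∈ SsetOf src tgt J, I'.Nonempty → 0 ≤ θ (indVec I')) ∧
    ((∃ M : Q₁ → k, {α | M α ≠ 0} = J ∧ IsStableRep src tgt θ M) ↔
      ∀ I' ∈ SsetOf src tgt J, I'.Nonempty → I' ≠ Set.univ → 0 < θ (indVec I')) :=
  stmt0_general src tgt θ hθ.ge J
end

section
/- Let 𝔠 be any W-invariant homogeneous ideal of C. Then p(𝔠) is an ideal of A, and the map induced by p on quotients restricts to an isomorphism of graded ℚ-vector spaces from the anti-invariant part (C/𝔠)^a onto A/p(𝔠) which decreases degrees by δ; i.e. for every i, ((C/𝔠)^a)_{i+δ} ≅ (A/p(𝔠))_i. -/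
open MvPolynomial

set_option maxHeartbeats 1000000
set_option synthInstance.maxHeartbeats 400000

/-- The index set of the variables `t_{i,ν}`, `i ∈ Q₀`, `1 ≤ ν ≤ d_i`. -/
abbrev Vars {Q₀ : Type} (d : Q₀ → ℕ) : Type := Σ i : Q₀, Fin (d i)

/-- The polynomial ring `C = ℚ[t_{i,ν}]`. -/
abbrev CRing {Q₀ : Type} (d : Q₀ → ℕ) : Type := MvPolynomial (Vars d) ℚ

/-- The group `W = ∏_i S_{d_i}`. -/
abbrev Wgrp {Q₀ : Type} (d : Q₀ → ℕ) : Type := ∀ i : Q₀, Equiv.Perm (Fin (d i))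

/-- The action of `w ∈ W` on `C` by `w·t_{i,ν} = t_{i,w_i(ν)}`. -/
noncomputable def wAct {Q₀ : Type} (d : Q₀ → ℕ) (w : Wgrp d) : CRing d →ₐ[ℚ] CRing d :=
  MvPolynomial.rename (fun x => ⟨x.1, w x.1 x.2⟩)

/-- The sign `sign(w) = ∏_i sign(w_i)` of `w ∈ W`, as a rational number. -/
def wSgn {Q₀ : Type} [Fintype Q₀] (d : Q₀ → ℕ) (w : Wgrp d) : ℚ :=
  ∏ i : Q₀, ((Equiv.Perm.sign (w i) : ℤ) : ℚ)

/-- The invariant ring `A = C^W`. -/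
noncomputable def Ainv {Q₀ : Type} (d : Q₀ → ℕ) : Subalgebra ℚ (CRing d) where
  carrier := {f | ∀ w : Wgrp d, wAct d w f = f}
  mul_mem' := by intro a b ha hb w; rw [map_mul, ha w, hb w]
  add_mem' := by intro a b ha hb w; rw [map_add, ha w, hb w]
  algebraMap_mem' := by intro r w; simp [wAct, MvPolynomial.algebraMap_eq]

noncomputable instance {Q₀ : Type} (d : Q₀ → ℕ) : Algebra (↥(Ainv d)) (CRing d) :=
  (Ainv d).toAlgebra

/-- The discriminant `Δ = ∏_i ∏_{μ<ν} (t_{i,ν} − t_{i,μ})`. -/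
noncomputable def Delta {Q₀ : Type} [Fintype Q₀] (d : Q₀ → ℕ) : CRing d :=
  ∏ i : Q₀, ∏ ν : Fin (d i), ∏ μ ∈ Finset.univ.filter (fun μ : Fin (d i) => μ < ν),
    (X (⟨i, ν⟩ : Vars d) - X (⟨i, μ⟩ : Vars d))

/-- `δ = deg Δ`. -/
noncomputable def deltaDeg {Q₀ : Type} [Fintype Q₀] (d : Q₀ → ℕ) : ℕ :=
  (Delta d).totalDegree

/-!
Write `T f = ∑ w, sign(w) • w f`, so that `Δ * p f = T f`. Dividing the `A`-linear map `T` by the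
non-zero-divisor `Δ` gives an `A`-linear map `p`, hence `p(𝔠)` is an `A`-submodule, and `p` lowers
degrees by `deg Δ`. If `f` is anti-invariant modulo `𝔠`, then `T f` and `|W| • f` agree modulo `𝔠`;
as `|W|` is invertible and `T` preserves `𝔠`, it follows from `p f ∈ p(𝔠)` that `f ∈ 𝔠`. Finally
`Δ` is itself anti-invariant, so an invariant `a` is the image of the anti-invariant `|W|⁻¹ Δ a`.
-/

section Linear

variable {A M N : Type*} [Semiring A] [AddCommMonoid M] [AddCommMonoid N] [Module A M] [Module A N]

theorem isLinearMap_of_injective_comp {P : Type*} [AddCommMonoid P] [Module A P] {j : N →ₗ[A] P}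
    (hj : Function.Injective j) (T : M →ₗ[A] P) {p : M → N} (h : ∀ x, j (p x) = T x) :
    IsLinearMap A p where
  map_add x y := hj (by simp only [map_add, h])
  map_smul a x := hj (by simp only [map_smul, h])

theorem coe_span_image_of_isLinearMap {p : M → N} (hp : IsLinearMap A p) (S : Submodule A M) :
    (Submodule.span A (p '' S) : Set N) = p '' S :=
  congrArg SetLike.coe (Submodule.span_eq (S.map (hp.mk' p)))

end Linear

section TwistedSum

variable {ι K A M : Type*} [Fintype ι] [Ring K] [Semiring A] [AddCommGroup M]
  [Module K M] [Module A M] [SMulCommClass A K M]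

/-- The sum `∑ w, ε w • φ w` of a finite family of `A`-linear endomorphisms with weights in `K`.
For a group acting by `φ` and a quadratic character `ε` it is `|ι|` times the projection onto the
`ε`-isotypic part. Indexing by a bare type avoids having to choose a group structure. -/
def twistedSum (ε : ι → K) (φ : ι → M →ₗ[A] M) : M →ₗ[A] M :=
  ∑ w, ε w • φ w

variable {ε : ι → K} {φ : ι → M →ₗ[A] M} {S : Submodule K M} {f : M}

theorem twistedSum_apply (ε : ι → K) (φ : ι → M →ₗ[A] M) (f : M) :
    twistedSum ε φ f = ∑ w, ε w • φ w f := by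
  simp only [twistedSum, LinearMap.sum_apply, LinearMap.smul_apply]

theorem twistedSum_mem (hf : ∀ w, φ w f ∈ S) : twistedSum ε φ f ∈ S := by
  rw [twistedSum_apply]
  exact S.sum_mem fun w _ => S.smul_mem _ (hf w)

theorem twistedSum_sub_card_smul_mem (hε : ∀ w, ε w * ε w = 1)
    (hf : ∀ w, φ w f - ε w • f ∈ S) :
    twistedSum ε φ f - (Fintype.card ι : K) • f ∈ S := by
  have h : twistedSum ε φ f - (Fintype.card ι : K) • f = ∑ w, ε w • (φ w f - ε w • f) := by
    simp only [twistedSum_apply, smul_sub, smul_smul, hε, one_smul, Finset.sum_sub_distrib,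
      Finset.sum_const, Finset.card_univ, Nat.cast_smul_eq_nsmul]
  rw [h]
  exact S.sum_mem fun w _ => S.smul_mem _ (hf w)

theorem twistedSum_eq_card_smul (hε : ∀ w, ε w * ε w = 1) (hf : ∀ w, φ w f = ε w • f) :
    twistedSum ε φ f = (Fintype.card ι : K) • f :=
  sub_eq_zero.mp <| (Submodule.mem_bot K).mp <|
    twistedSum_sub_card_smul_mem hε fun w => (Submodule.mem_bot K).mpr (sub_eq_zero.mpr (hf w))

theorem mem_of_twistedSum_mem (hι : IsUnit (Fintype.card ι : K)) (hε : ∀ w, ε w * ε w = 1)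
    (hf : ∀ w, φ w f - ε w • f ∈ S) (hT : twistedSum ε φ f ∈ S) : f ∈ S :=
  (S.smul_mem_iff_of_isUnit hι).mp <|
    (S.sub_mem_iff_right hT).mp (twistedSum_sub_card_smul_mem hε hf)

end TwistedSum

section Homogeneous

variable {σ R : Type*} [CommSemiring R] {f g : MvPolynomial σ R} {m n : ℕ}

theorem homogeneousComponent_add_mul (hf : f.IsHomogeneous m) (g : MvPolynomial σ R) (n : ℕ) :
    homogeneousComponent (m + n) (f * g) = f * homogeneousComponent n g := by
  let _ : GradedAlgebra (homogeneousSubmodule σ R) := gradedAlgebra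
  have h := DirectSum.coe_decompose_mul_add_of_left_mem (homogeneousSubmodule σ R) (j := n) (b := g)
    ((mem_homogeneousSubmodule m f).mpr hf)
  rw [← decomposition.decompose'_apply, ← decomposition.decompose'_apply]
  exact h

theorem isHomogeneous_of_mul_left (hf : f.IsHomogeneous m) (hreg : IsLeftRegular f)
    (h : (f * g).IsHomogeneous (m + n)) : g.IsHomogeneous n := by
  have hg : g = homogeneousComponent n g := hreg <| by
    simp only [← homogeneousComponent_add_mul hf, homogeneousComponent_eq_self h]
  rw [hg]
  exact homogeneousComponent_isHomogeneous n g

end Homogeneous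

section Delta

variable {Q₀ : Type} (d : Q₀ → ℕ)

theorem wAct_det_vandermonde (w : Wgrp d) (i : Q₀) :
    wAct d w (Matrix.vandermonde fun ν : Fin (d i) => (X ⟨i, ν⟩ : CRing d)).det =
      ((Equiv.Perm.sign (w i) : ℤ) : ℚ) •
        (Matrix.vandermonde fun ν : Fin (d i) => (X ⟨i, ν⟩ : CRing d)).det := by
  set V := Matrix.vandermonde fun ν : Fin (d i) => (X ⟨i, ν⟩ : CRing d)
  have hV : (wAct d w).mapMatrix V = V.submatrix (w i) id := by
    ext1 μ k
    simp [V, Matrix.vandermonde_apply, wAct]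
  rw [AlgHom.map_det, hV, Matrix.det_permute, Int.cast_smul_eq_zsmul, zsmul_eq_mul]

variable [Fintype Q₀]

theorem wSgn_mul_self (w : Wgrp d) : wSgn d w * wSgn d w = 1 := by
  rw [wSgn, ← Finset.prod_mul_distrib]
  refine Finset.prod_eq_one fun i _ => ?_
  exact_mod_cast Int.units_coe_mul_self (Equiv.Perm.sign (w i))

theorem Delta_eq_prod_det_vandermonde :
    Delta d = ∏ i, (Matrix.vandermonde fun ν : Fin (d i) => (X ⟨i, ν⟩ : CRing d)).det := by
  refine Finset.prod_congr rfl fun i _ => ?_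
  rw [Matrix.det_vandermonde]
  exact Finset.prod_comm' (by simp)

theorem wAct_Delta (w : Wgrp d) : wAct d w (Delta d) = wSgn d w • Delta d := by
  simp only [Delta_eq_prod_det_vandermonde, map_prod, wAct_det_vandermonde, wSgn,
    Finset.prod_smul]

theorem Delta_ne_zero : Delta d ≠ 0 := by
  rw [Delta_eq_prod_det_vandermonde]
  exact Finset.prod_ne_zero_iff.mpr fun i _ =>
    Matrix.det_vandermonde_ne_zero_iff.mpr (X_injective.comp sigma_mk_injective)

theorem isHomogeneous_Delta : (Delta d).IsHomogeneous (deltaDeg d) := by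
  have h : (Delta d).IsHomogeneous
      (∑ i, ∑ ν : Fin (d i), ∑ _μ ∈ Finset.univ.filter (fun μ : Fin (d i) => μ < ν), 1) :=
    .prod _ _ _ fun i _ => .prod _ _ _ fun _ _ => .prod _ _ _ fun _ _ =>
      (isHomogeneous_X ℚ _).sub (isHomogeneous_X ℚ _)
  rwa [deltaDeg, h.totalDegree (Delta_ne_zero d)]

end Delta

/-- The action of `w ∈ W` on `C` as an endomorphism of the module `C` over the invariant ring
`A`. -/
noncomputable def wActLinear {Q₀ : Type} (d : Q₀ → ℕ) (w : Wgrp d) :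
    CRing d →ₗ[Ainv d] CRing d where
  toFun := wAct d w
  map_add' := map_add _
  map_smul' a f := (map_mul (wAct d w) a.1 f).trans (congrArg (· * wAct d w f) (a.2 w))

section Symmetrization

variable {Q₀ : Type} [Fintype Q₀] [DecidableEq Q₀] {d : Q₀ → ℕ}

variable (d) in
/-- The map `p` is the symmetrization map `f ↦ Δ⁻¹ ∑ w, sign(w) • w f`. The division is encoded by
multiplying with `Δ`, which determines `p` because `Δ` is a non-zero-divisor. -/
def IsSymmetrization (p : CRing d → CRing d) : Prop :=
  ∀ f, Delta d * p f = ∑ w : Wgrp d, wSgn d w • wAct d w f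

namespace IsSymmetrization

variable {p : CRing d → CRing d}

theorem Delta_mul_eq_twistedSum (hp : IsSymmetrization d p) (f : CRing d) :
    Delta d * p f = twistedSum (wSgn d) (wActLinear d) f :=
  (hp f).trans (twistedSum_apply (wSgn d) (wActLinear d) f).symm

theorem isLinearMap (hp : IsSymmetrization d p) : IsLinearMap (Ainv d) p :=
  isLinearMap_of_injective_comp (j := LinearMap.mulLeft (Ainv d) (Delta d))
    (mul_right_injective₀ (Delta_ne_zero d)) (twistedSum (wSgn d) (wActLinear d))
    hp.Delta_mul_eq_twistedSum

theorem isHomogeneous (hp : IsSymmetrization d p) {f : CRing d} {i : ℕ}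
    (hf : f.IsHomogeneous (i + deltaDeg d)) : (p f).IsHomogeneous i := by
  refine isHomogeneous_of_mul_left (isHomogeneous_Delta d)
    (mul_right_injective₀ (Delta_ne_zero d)) ?_
  rw [hp f, add_comm]
  exact .sum _ _ _ fun w _ =>
    (homogeneousSubmodule (Vars d) ℚ _).smul_mem _ hf.rename_isHomogeneous

theorem mem_of_mem_image (hp : IsSymmetrization d p) {𝔠 : Ideal (CRing d)}
    (hWinv : ∀ (w : Wgrp d), ∀ f ∈ 𝔠, wAct d w f ∈ 𝔠) {f : CRing d}
    (hf : ∀ w : Wgrp d, wAct d w f - wSgn d w • f ∈ 𝔠) (hpf : p f ∈ p '' 𝔠) : f ∈ 𝔠 := by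
  obtain ⟨g, hg, hgf⟩ := hpf
  have hT : twistedSum (wSgn d) (wActLinear d) f ∈ 𝔠.restrictScalars ℚ := by
    rw [← hp.Delta_mul_eq_twistedSum, ← hgf, hp.Delta_mul_eq_twistedSum]
    exact twistedSum_mem fun w => hWinv w g hg
  exact mem_of_twistedSum_mem (S := 𝔠.restrictScalars ℚ)
    (.mk0 _ (Nat.cast_ne_zero.mpr Fintype.card_ne_zero)) (wSgn_mul_self d) hf hT

theorem exists_antiinvariant_apply_eq (hp : IsSymmetrization d p) {a : CRing d} (ha : a ∈ Ainv d)
    {i : ℕ} (hai : a.IsHomogeneous i) :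
    ∃ f : CRing d, f.IsHomogeneous (i + deltaDeg d) ∧
      (∀ w : Wgrp d, wAct d w f = wSgn d w • f) ∧ p f = a := by
  have hcard : (Fintype.card (Wgrp d) : ℚ) ≠ 0 := Nat.cast_ne_zero.mpr Fintype.card_ne_zero
  set f : CRing d := (Fintype.card (Wgrp d) : ℚ)⁻¹ • (Delta d * a) with hf
  have hanti (w : Wgrp d) : wAct d w f = wSgn d w • f := by
    rw [hf, map_smul, map_mul, wAct_Delta, ha w, smul_mul_assoc, smul_comm]
  refine ⟨f, ?_, hanti, mul_left_cancel₀ (Delta_ne_zero d) ?_⟩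
  · rw [add_comm]
    exact (homogeneousSubmodule (Vars d) ℚ _).smul_mem _ ((isHomogeneous_Delta d).mul hai)
  · rw [hp.Delta_mul_eq_twistedSum, twistedSum_eq_card_smul (wSgn_mul_self d) hanti, hf,
      smul_inv_smul₀ hcard]

end IsSymmetrization

theorem stmt6_general {𝔠 : Ideal (CRing d)}
    (hWinv : ∀ (w : Wgrp d), ∀ f ∈ 𝔠, wAct d w f ∈ 𝔠)
    {p : CRing d → CRing d} (hp : IsSymmetrization d p) :
    (Submodule.span (Ainv d) (p '' 𝔠) : Set (CRing d)) = p '' 𝔠 ∧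
    (∀ i (f : CRing d), f.IsHomogeneous (i + deltaDeg d) → (p f).IsHomogeneous i) ∧
    (∀ f, (∀ w : Wgrp d, wAct d w f - wSgn d w • f ∈ 𝔠) →
      p f ∈ Submodule.span (Ainv d) (p '' 𝔠) → f ∈ 𝔠) ∧
    (∀ i, ∀ a ∈ Ainv d, a.IsHomogeneous i → ∃ f : CRing d, f.IsHomogeneous (i + deltaDeg d) ∧
      (∀ w : Wgrp d, wAct d w f = wSgn d w • f) ∧ p f = a) := by
  have hspan : (Submodule.span (Ainv d) (p '' 𝔠) : Set (CRing d)) = p '' 𝔠 :=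
    coe_span_image_of_isLinearMap hp.isLinearMap (𝔠.restrictScalars (Ainv d))
  exact ⟨hspan, fun _ _ => hp.isHomogeneous,
    fun _ hf hpf => hp.mem_of_mem_image hWinv hf (hspan ▸ hpf),
    fun _ _ ha => hp.exists_antiinvariant_apply_eq ha⟩

end Symmetrization

/-- For a `W`-invariant homogeneous ideal `𝔠` of `C`, the image
`p(𝔠)` is an ideal of `A` (its `A`-span adds nothing), and the map induced by the
symmetrization map `p` on quotients restricts, in each degree, to an isomorphism
from the degree-`(i+δ)` anti-invariant part of `C/𝔠` onto the degree-`i` part of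
`A/p(𝔠)`; i.e. it decreases degrees by `δ`, is injective and surjective. -/
theorem stmt6 {Q₀ : Type} [Fintype Q₀] [DecidableEq Q₀] (d : Q₀ → ℕ) (hd : ∀ i, 0 < d i)
    (𝔠 : Ideal (CRing d))
    (hWinv : ∀ (w : Wgrp d), ∀ f ∈ 𝔠, wAct d w f ∈ 𝔠)
    (hHomog : ∀ f ∈ 𝔠, ∀ n : ℕ, MvPolynomial.homogeneousComponent n f ∈ 𝔠)
    -- the symmetrization map `p`, characterized by `Δ · p(f) = Σ_w sign(w)·(w·f)`,
    -- taking values in the invariant ring `A`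
    (p : CRing d → CRing d)
    (hp : ∀ f : CRing d, Delta d * p f = ∑ w : Wgrp d, wSgn d w • wAct d w f)
    (hpA : ∀ f : CRing d, p f ∈ Ainv d) :
    -- `p(𝔠)` is an ideal of `A`:
    ((Submodule.span ↥(Ainv d) (p '' 𝔠) : Submodule ↥(Ainv d) (CRing d)) : Set (CRing d))
        = p '' 𝔠 ∧
    -- the induced map `[f] ↦ [p f]` on quotients is a degree-(−δ) isomorphism
    -- from the anti-invariants of `C/𝔠` onto `A/p(𝔠)`:
    ∀ i : ℕ,
      (∀ f : CRing d, f.IsHomogeneous (i + deltaDeg d) →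
        (∀ w : Wgrp d, wAct d w f - wSgn d w • f ∈ 𝔠) →
        (p f).IsHomogeneous i) ∧
      (∀ f : CRing d, f.IsHomogeneous (i + deltaDeg d) →
        (∀ w : Wgrp d, wAct d w f - wSgn d w • f ∈ 𝔠) →
        p f ∈ Submodule.span ↥(Ainv d) (p '' 𝔠) → f ∈ 𝔠) ∧
      (∀ a : CRing d, a ∈ Ainv d → a.IsHomogeneous i →
        ∃ f : CRing d, f.IsHomogeneous (i + deltaDeg d) ∧
          (∀ w : Wgrp d, wAct d w f = wSgn d w • f) ∧
          a - p f ∈ Submodule.span ↥(Ainv d) (p '' 𝔠)) := by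
  obtain ⟨hspan, hdeg, hinj, hsurj⟩ := stmt6_general hWinv hp
  exact ⟨hspan, fun i => ⟨fun f hf _ => hdeg i f hf, fun f _ => hinj f, fun a ha hai =>
    (hsurj i a ha hai).imp fun f ⟨hf, hanti, hpf⟩ => ⟨hf, hanti, by simp [hpf]⟩⟩⟩
end

section
/- Let m ≥ 2 and R := ℚ[x₁,…,x_{m−1},y] with the standard grading. Then the elements y·x₁ − x₁², …, y·x_{m−1} − x_{m−1}² form a regular sequence in R, and consequently the quotient ring R/(y·x_i − x_i² : 1 ≤ i ≤ m−1) has Hilbert series (1+t)^{m−1}/(1−t); i.e. for every j ≥ 0 the dimension over ℚ of its degree-j homogeneous component equals Σ_{ν=0}^{min(j, m−1)} binom(m−1, ν). -/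
open MvPolynomial

/-- The polynomial ring `R = ℚ[x₁,…,x_{m−1},y]`: the variable `none` is `y` and
`some i` is `x_i`. -/
abbrev Rring (m : ℕ) : Type := MvPolynomial (Option (Fin (m - 1))) ℚ

/-- The element `y·x_i − x_i²` of `R`. -/
noncomputable def relElt (m : ℕ) (i : Fin (m - 1)) : Rring m :=
  X none * X (some i) - X (some i) ^ 2

/-!
The relations `y xᵢ - xᵢ²` with `i ∈ S` cut out a union of linear subspaces, one for each choice
of `xᵢ = 0` or `xᵢ = y` for every `i ∈ S`. Newton interpolation at the nodes `0` and `y`, one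
variable at a time, shows that the ideal they generate is exactly the ideal of polynomials
vanishing on all these subspaces. A further relation restricts to itself on each of them, hence is
a non-zerodivisor modulo this ideal.

When every variable is involved, the subspaces are the lines through the points with `y = 1` and
`x` a vertex of the cube `{0, 1}ⁿ`, so a homogeneous polynomial lies in the ideal iff it vanishes
at these points. As a function of the vertex `T`, a monomial is the indicator of `U ⊆ T`, where
`U` is the set of the `xᵢ` dividing it. These indicators are linearly independent, and in degree
`j` the sets `U` that occur are those with at most `j` elements.
-/

section Substitution

variable {σ R : Type*} [CommRing R]

open scoped Classical in
/-- The substitution `f ↦ f|_{X v = p}`, which leaves the variables other than `X v` alone. -/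
noncomputable def substVar (v : σ) (p : MvPolynomial σ R) :
    MvPolynomial σ R →ₐ[R] MvPolynomial σ R :=
  aeval (Function.update X v p)

@[simp]
lemma substVar_X_self (v : σ) (p : MvPolynomial σ R) : substVar v p (X v) = p := by
  simp [substVar]

lemma substVar_X_of_ne {u v : σ} (huv : u ≠ v) (p : MvPolynomial σ R) :
    substVar v p (X u) = X u := by
  simp [substVar, huv]

lemma X_sub_dvd_sub_substVar (v : σ) (p f : MvPolynomial σ R) :
    X v - p ∣ f - substVar v p f := by
  let π := Ideal.Quotient.mkₐ R (Ideal.span {X v - p})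
  have hπ : π = π.comp (substVar v p) := by
    ext u
    by_cases huv : u = v
    · subst huv
      simpa [π] using Ideal.Quotient.eq.mpr (Ideal.mem_span_singleton_self (X u - p))
    · simp [substVar_X_of_ne huv]
  rw [← Ideal.mem_span_singleton, ← Ideal.Quotient.eq]
  exact DFunLike.congr_fun hπ f

lemma substVar_X_sub_X_involutive {u v : σ} (huv : u ≠ v) :
    Function.Involutive (substVar v (X u - X v : MvPolynomial σ R)) := by
  intro f
  have hcomp : (substVar v (X u - X v : MvPolynomial σ R)).comp (substVar v (X u - X v)) =
      AlgHom.id R _ := by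
    ext1 w
    by_cases hwv : w = v
    · subst hwv
      simp [substVar_X_of_ne huv]
    · simp [substVar_X_of_ne hwv]
  exact DFunLike.congr_fun hcomp f

lemma isRegular_X_sub_X {u v : σ} (huv : u ≠ v) :
    IsRegular (X u - X v : MvPolynomial σ R) := by
  rw [isRegular_iff_mem_nonZeroDivisors, mem_nonZeroDivisors_iff_right]
  intro f hf
  have hX : substVar v (X u - X v) f * X v = 0 := by
    rw [← map_zero (substVar v (X u - X v)), ← hf, map_mul, map_sub, substVar_X_of_ne huv,
      substVar_X_self, sub_sub_cancel]
  have hzero : substVar v (X u - X v) f = 0 := isRegular_X.right.mul_right_eq_zero_iff.mp hX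
  rw [← substVar_X_sub_X_involutive huv f, hzero, map_zero]

end Substitution

lemma aeval_mul_const_of_isHomogeneous {σ R A : Type*} [CommSemiring R] [CommSemiring A]
    [Algebra R A] {f : MvPolynomial σ R} {n : ℕ} (hf : f.IsHomogeneous n) (a : σ → A) (t : A) :
    aeval (fun v => a v * t) f = aeval a f * t ^ n := by
  simp only [aeval_def, eval₂_eq, Finset.sum_mul]
  refine Finset.sum_congr rfl fun d hd => ?_
  have hdeg : ∑ i ∈ d.support, d i = n := (hf.degree_eq_sum_deg_support hd).symm
  simp only [mul_pow, Finset.prod_mul_distrib, Finset.prod_pow_eq_pow_sum, hdeg, mul_assoc]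

lemma finrank_map_eq_of_forall_mem {R M N P : Type*} [Ring R] [AddCommGroup M] [AddCommGroup N]
    [AddCommGroup P] [Module R M] [Module R N] [Module R P] {p : Submodule R M}
    {f : M →ₗ[R] N} {g : M →ₗ[R] P} (h : ∀ x ∈ p, f x = 0 ↔ g x = 0) :
    Module.finrank R (p.map f) = Module.finrank R (p.map g) := by
  have hker : LinearMap.ker (f.domRestrict p) = LinearMap.ker (g.domRestrict p) := by
    ext x
    simpa using h x x.2
  rw [← LinearMap.range_domRestrict, ← LinearMap.range_domRestrict]
  exact ((f.domRestrict p).quotKerEquivRange.symm.trans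
    ((Submodule.quotEquivOfEq _ _ hker).trans (g.domRestrict p).quotKerEquivRange)).finrank_eq

lemma linearIndependent_indicator_Ici (R : Type*) {P : Type*} [Ring R] [PartialOrder P] :
    LinearIndependent R fun a : P => (Set.Ici a).indicator (1 : P → R) := by
  classical
  rw [linearIndependent_iff']
  intro s c hc
  by_contra! hne
  obtain ⟨a, ha⟩ := (s.filter (c · ≠ 0)).exists_minimal (by simpa [Finset.Nonempty] using hne)
  have has : a ∈ s ∧ c a ≠ 0 := by simpa using ha.prop
  have hsum : ∑ b ∈ s, c b • (Set.Ici b).indicator (1 : P → R) a = c a := by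
    rw [Finset.sum_eq_single_of_mem a has.1]
    · simp
    · intro b hb hba
      by_cases hle : b ≤ a
      · have hcb : c b = 0 := by
          by_contra hcb
          exact hba (hle.antisymm (ha.le_of_le (by simp [hb, hcb]) hle))
        simp [hcb]
      · simp [hle]
  refine has.2 (hsum.symm.trans ?_)
  simpa using congrFun hc a

lemma card_finset_card_le (ι : Type*) [Fintype ι] (j : ℕ) :
    Fintype.card {U : Finset ι // U.card ≤ j} =
      ∑ ν ∈ Finset.range (min j (Fintype.card ι) + 1), (Fintype.card ι).choose ν := by
  classical
  have hmaps : ∀ U ∈ Finset.univ.filter fun U : Finset ι => U.card ≤ j,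
      U.card ∈ Finset.range (min j (Fintype.card ι) + 1) := by
    intro U hU
    have hle : U.card ≤ j := by simpa using hU
    exact Finset.mem_range_succ_iff.mpr (le_min hle U.card_le_univ)
  rw [Fintype.card_subtype, Finset.card_eq_sum_card_fiberwise hmaps]
  refine Finset.sum_congr rfl fun ν hν => ?_
  have hνj : ν ≤ j := (Finset.mem_range_succ_iff.mp hν).trans (min_le_left _ _)
  rw [← Finset.card_univ, ← Finset.card_powersetCard]
  congr 1
  ext U
  simp only [Finset.mem_filter, Finset.mem_univ, true_and, Finset.mem_powersetCard_univ]
  omega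

lemma image_eraseNone_support_degree_eq {ι : Type*} (j : ℕ) :
    (fun d : Option ι →₀ ℕ => Finset.eraseNone d.support) '' {d | d.degree = j} =
      {U : Finset ι | U.card ≤ j} := by
  classical
  ext U
  constructor
  · rintro ⟨d, rfl, rfl⟩
    calc (Finset.eraseNone d.support).card ≤ d.support.card := Finset.card_eraseNone_le _
      _ ≤ ∑ i ∈ d.support, d i := by
        simpa using Finset.card_nsmul_le_sum d.support d 1 fun i hi =>
          Nat.one_le_iff_ne_zero.mpr (Finsupp.mem_support_iff.mp hi)
  · intro hU
    refine ⟨Finsupp.single none (j - U.card) + ∑ i ∈ U, Finsupp.single (some i) 1, ?_, ?_⟩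
    · rw [Set.mem_ofPred_eq, map_add, map_sum]
      simp only [Finsupp.degree_single, Finset.sum_const, smul_eq_mul, mul_one]
      exact Nat.sub_add_cancel hU
    · ext i
      simp [Finsupp.single_apply]

section BooleanRelations

variable (R : Type*) {ι : Type*} [CommRing R]

/-- The Boolean relation `xᵢ = xᵢ²`, homogenized by the variable `y = X none`. -/
noncomputable def booleanRelation (i : ι) : MvPolynomial (Option ι) R :=
  X none * X (some i) - X (some i) ^ 2

/-- The ideal generated by the Boolean relations of the variables in `S`. -/
noncomputable def booleanIdeal (S : Finset ι) : Ideal (MvPolynomial (Option ι) R) :=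
  Ideal.span (booleanRelation R '' S)

variable {R} in
lemma booleanIdeal_mono {S T : Finset ι} (hST : S ⊆ T) : booleanIdeal R S ≤ booleanIdeal R T :=
  Ideal.span_mono (Set.image_mono (Finset.coe_subset.mpr hST))

lemma ofList_map_booleanRelation [DecidableEq ι] (l : List ι) :
    Ideal.ofList (l.map (booleanRelation R)) = booleanIdeal R l.toFinset := by
  simp [Ideal.ofList, booleanIdeal, Set.image]

lemma isRegular_booleanRelation (i : ι) : IsRegular (booleanRelation R i) := by
  have hfactor : booleanRelation R i = X (some i) * (X none - X (some i)) := by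
    unfold booleanRelation
    ring
  rw [hfactor]
  exact isRegular_X.mul (isRegular_X_sub_X (Option.some_ne_none i).symm)

variable [DecidableEq ι]

/-- Restriction of polynomials to the linear subspace `xᵢ = y` for `i ∈ S ∩ T`, `xᵢ = 0` for
`i ∈ S \ T`. This is the cone, with `y` as cone coordinate, over a face of the cube: the
coordinates in `S` are frozen, those outside `S` stay free. -/
noncomputable def faceRestriction (S T : Finset ι) :
    MvPolynomial (Option ι) R →ₐ[R] MvPolynomial (Option ι) R :=
  aeval fun
    | none => X none
    | some i => if i ∈ S then (if i ∈ T then X none else 0) else X (some i)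

variable {R}

@[simp]
lemma faceRestriction_X_none (S T : Finset ι) :
    faceRestriction R S T (X none) = X none := by
  simp [faceRestriction]

@[simp]
lemma faceRestriction_X_some (S T : Finset ι) (i : ι) :
    faceRestriction R S T (X (some i)) =
      if i ∈ S then (if i ∈ T then X none else 0) else X (some i) := by
  simp [faceRestriction]

lemma faceRestriction_empty (T : Finset ι) : faceRestriction R ∅ T = AlgHom.id R _ := by
  ext1 (_ | i) <;> simp

lemma faceRestriction_booleanRelation_of_mem {S : Finset ι} {i : ι} (hi : i ∈ S)
    (T : Finset ι) : faceRestriction R S T (booleanRelation R i) = 0 := by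
  by_cases hT : i ∈ T <;> simp [booleanRelation, hi, hT, sq]

lemma faceRestriction_booleanRelation_of_notMem {S : Finset ι} {i : ι} (hi : i ∉ S)
    (T : Finset ι) :
    faceRestriction R S T (booleanRelation R i) = booleanRelation R i := by
  simp [booleanRelation, hi]

lemma faceRestriction_substVar_zero (S T : Finset ι) (k : ι)
    (f : MvPolynomial (Option ι) R) :
    faceRestriction R S T (substVar (some k) 0 f) =
      faceRestriction R (insert k S) (T.erase k) f := by
  have hcomp : (faceRestriction R S T).comp (substVar (some k) 0) =
      faceRestriction R (insert k S) (T.erase k) := by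
    ext1 (_ | i)
    · simp [substVar_X_of_ne]
    · by_cases hik : i = k
      · simp [hik]
      · simp [hik, substVar_X_of_ne]
  exact DFunLike.congr_fun hcomp f

lemma faceRestriction_substVar_X_none (S T : Finset ι) (k : ι)
    (f : MvPolynomial (Option ι) R) :
    faceRestriction R S T (substVar (some k) (X none) f) =
      faceRestriction R (insert k S) (insert k T) f := by
  have hcomp : (faceRestriction R S T).comp (substVar (some k) (X none)) =
      faceRestriction R (insert k S) (insert k T) := by
    ext1 (_ | i)
    · simp [substVar_X_of_ne]
    · by_cases hik : i = k
      · simp [hik]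
      · simp [hik, substVar_X_of_ne]
  exact DFunLike.congr_fun hcomp f

lemma faceRestriction_eq_zero_of_mem_booleanIdeal {S : Finset ι} {f : MvPolynomial (Option ι) R}
    (hf : f ∈ booleanIdeal R S) (T : Finset ι) :
    faceRestriction R S T f = 0 := by
  have hle : booleanIdeal R S ≤ RingHom.ker (faceRestriction R S T) := by
    rw [booleanIdeal, Ideal.span_le]
    rintro _ ⟨i, hi, rfl⟩
    exact faceRestriction_booleanRelation_of_mem hi T
  exact hle hf

lemma mem_booleanIdeal_of_faceRestriction_eq_zero {S : Finset ι} {f : MvPolynomial (Option ι) R}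
    (hf : ∀ T, faceRestriction R S T f = 0) :
    f ∈ booleanIdeal R S := by
  induction S using Finset.induction_on generalizing f with
  | empty =>
    have hzero : f = 0 := by simpa [faceRestriction_empty] using hf ∅
    exact hzero ▸ Ideal.zero_mem _
  | insert k S _ ih =>
    have hle : booleanIdeal R S ≤ booleanIdeal R (insert k S) :=
      booleanIdeal_mono (Finset.subset_insert k S)
    -- Newton interpolation of `f` in the variable `xₖ` at the nodes `0` and `y`.
    obtain ⟨g, hg⟩ := X_sub_dvd_sub_substVar (some k) 0 f
    obtain ⟨h, hh⟩ := X_sub_dvd_sub_substVar (some k) (X none) g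
    have hf₀ : substVar (some k) 0 f ∈ booleanIdeal R S :=
      ih fun T => (faceRestriction_substVar_zero S T k f).trans (hf _)
    have hg₁ : substVar (some k) (X none) g ∈ booleanIdeal R S := by
      refine ih fun T => (faceRestriction_substVar_X_none S T k g).trans ?_
      have hmul : X none * faceRestriction R (insert k S) (insert k T) g = 0 := by
        simpa [hf, faceRestriction_eq_zero_of_mem_booleanIdeal (hle hf₀)] using
          (congrArg (faceRestriction R (insert k S) (insert k T)) hg).symm
      exact isRegular_X.left.mul_left_eq_zero_iff.mp hmul
    have hk_mem : booleanRelation R k ∈ booleanIdeal R (insert k S) :=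
      Ideal.subset_span ⟨k, by simp, rfl⟩
    have hnewton : f = substVar (some k) 0 f + X (some k) * substVar (some k) (X none) g +
        -h * booleanRelation R k := by
      unfold booleanRelation
      linear_combination hg + X (some k) * hh
    rw [hnewton]
    exact add_mem (add_mem (hle hf₀) (Ideal.mul_mem_left _ _ (hle hg₁)))
      (Ideal.mul_mem_left _ _ hk_mem)

theorem mem_booleanIdeal_iff {S : Finset ι} {f : MvPolynomial (Option ι) R} :
    f ∈ booleanIdeal R S ↔ ∀ T, faceRestriction R S T f = 0 :=
  ⟨faceRestriction_eq_zero_of_mem_booleanIdeal, mem_booleanIdeal_of_faceRestriction_eq_zero⟩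

omit [DecidableEq ι] in
lemma mem_booleanIdeal_of_booleanRelation_mul_mem {S : Finset ι} {k : ι} (hk : k ∉ S)
    {f : MvPolynomial (Option ι) R}
    (hf : booleanRelation R k * f ∈ booleanIdeal R S) :
    f ∈ booleanIdeal R S := by
  classical
  rw [mem_booleanIdeal_iff] at hf ⊢
  intro T
  have hmul := hf T
  rw [map_mul, faceRestriction_booleanRelation_of_notMem hk] at hmul
  exact (isRegular_booleanRelation R k).left.mul_left_eq_zero_iff.mp hmul

omit [DecidableEq ι] in
lemma booleanIdeal_ne_top [Nontrivial R] (S : Finset ι) : booleanIdeal R S ≠ ⊤ := by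
  classical
  rw [Ideal.ne_top_iff_one, mem_booleanIdeal_iff]
  simp

omit [DecidableEq ι] in
theorem isRegular_map_booleanRelation [Nontrivial R] {l : List ι} (hl : l.Nodup) :
    RingTheory.Sequence.IsRegular (MvPolynomial (Option ι) R) (l.map (booleanRelation R)) := by
  classical
  refine ⟨⟨fun i hi => ?_⟩, ?_⟩
  · rw [List.length_map] at hi
    have hnotMem : l[i] ∉ (l.take i).toFinset := by
      rw [List.mem_toFinset, List.mem_take_iff_getElem]
      rintro ⟨j, hj, hji⟩
      have : j = i := hl.getElem_inj_iff.mp hji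
      omega
    rw [isSMulRegular_quotient_iff_mem_of_smul_mem, ← List.map_take,
      ofList_map_booleanRelation, smul_eq_mul, Ideal.mul_top, List.getElem_map]
    exact fun f => mem_booleanIdeal_of_booleanRelation_mul_mem hnotMem
  · rw [ofList_map_booleanRelation, smul_eq_mul, Ideal.mul_top]
    exact (booleanIdeal_ne_top _).symm

end BooleanRelations

section HilbertFunction

variable (R : Type*) {ι : Type*} [CommRing R] [DecidableEq ι]

/-- The vertex of the cube indexed by `T`, at height `y = 1`: `xᵢ` is `1` for `i ∈ T` and `0`
otherwise. -/
def cubeVertex (T : Finset ι) : Option ι → R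
  | none => 1
  | some i => if i ∈ T then 1 else 0

/-- Simultaneous evaluation at all vertices of the cube. -/
noncomputable def cubeEval : MvPolynomial (Option ι) R →ₗ[R] (Finset ι → R) :=
  LinearMap.pi fun T => (aeval (cubeVertex R T)).toLinearMap

variable {R}

lemma cubeEval_apply (f : MvPolynomial (Option ι) R) (T : Finset ι) :
    cubeEval R f T = aeval (cubeVertex R T) f := rfl

lemma faceRestriction_univ_of_isHomogeneous [Fintype ι] {f : MvPolynomial (Option ι) R} {j : ℕ}
    (hf : f.IsHomogeneous j) (T : Finset ι) :
    faceRestriction R Finset.univ T f = C (cubeEval R f T) * X none ^ j := by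
  have hsubst : faceRestriction R Finset.univ T =
      aeval fun v => algebraMap R (MvPolynomial (Option ι) R) (cubeVertex R T v) * X none := by
    ext1 (_ | i)
    · simp [cubeVertex]
    · by_cases hi : i ∈ T <;> simp [cubeVertex, hi]
  rw [hsubst, aeval_mul_const_of_isHomogeneous hf, cubeEval_apply]
  exact congrArg (· * _) (aeval_algebraMap_apply _ _ _)

theorem mem_span_range_booleanRelation_iff [Finite ι] {f : MvPolynomial (Option ι) R} {j : ℕ}
    (hf : f.IsHomogeneous j) :
    f ∈ Ideal.span (Set.range (booleanRelation R)) ↔ cubeEval R f = 0 := by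
  cases nonempty_fintype ι
  rw [← Set.image_univ, ← Finset.coe_univ, ← booleanIdeal, mem_booleanIdeal_iff, funext_iff]
  refine forall_congr' fun T => ?_
  rw [faceRestriction_univ_of_isHomogeneous hf,
    (isRegular_X_pow j).right.mul_right_eq_zero_iff, C_eq_zero, Pi.zero_apply]

lemma cubeEval_monomial (d : Option ι →₀ ℕ) :
    cubeEval R (monomial d 1) = (Set.Ici (Finset.eraseNone d.support)).indicator 1 := by
  funext T
  rw [cubeEval_apply, aeval_monomial, map_one, one_mul]
  by_cases hT : Finset.eraseNone d.support ≤ T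
  · rw [Set.indicator_of_mem hT]
    refine Finset.prod_eq_one ?_
    rintro (_ | i) hi
    · simp [cubeVertex]
    · simp [cubeVertex, hT (Finset.mem_eraseNone.mpr hi)]
  · rw [Set.indicator_of_notMem hT]
    obtain ⟨i, hi, hiT⟩ := Finset.not_subset.mp hT
    rw [Finset.mem_eraseNone] at hi
    exact Finset.prod_eq_zero hi (by simp [cubeVertex, hiT, Finsupp.mem_support_iff.mp hi])

lemma map_cubeEval_homogeneousSubmodule (j : ℕ) :
    (homogeneousSubmodule (Option ι) R j).map (cubeEval R) =
      Submodule.span R (Set.range fun U : {U : Finset ι // U.card ≤ j} =>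
        (Set.Ici U.1).indicator 1) := by
  have hspan : homogeneousSubmodule (Option ι) R j =
      Submodule.span R ((monomial · 1) '' {d | d.degree = j}) :=
    (homogeneousSubmodule_eq_finsupp_supported _ _ j).trans (restrictSupport_eq_span _ _)
  rw [hspan, Submodule.map_span, Set.image_image]
  simp only [cubeEval_monomial]
  rw [← Set.image_image (fun U : Finset ι => (Set.Ici U).indicator (1 : Finset ι → R)),
    image_eraseNone_support_degree_eq, Set.image_eq_range]
  rfl

omit [DecidableEq ι] in
theorem finrank_map_mk_homogeneousSubmodule [Nontrivial R] [Fintype ι] (j : ℕ) :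
    Module.finrank R ((homogeneousSubmodule (Option ι) R j).map
      (Ideal.Quotient.mkₐ R (Ideal.span (Set.range (booleanRelation R)))).toLinearMap) =
      ∑ ν ∈ Finset.range (min j (Fintype.card ι) + 1), (Fintype.card ι).choose ν := by
  classical
  have hker : ∀ f ∈ homogeneousSubmodule (Option ι) R j,
      (Ideal.Quotient.mkₐ R (Ideal.span (Set.range (booleanRelation R)))).toLinearMap f = 0 ↔
        cubeEval R f = 0 := fun f hf =>
    Ideal.Quotient.eq_zero_iff_mem.trans (mem_span_range_booleanRelation_iff hf)
  have hindep : LinearIndependent R fun U : {U : Finset ι // U.card ≤ j} =>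
      (Set.Ici U.1).indicator (1 : Finset ι → R) :=
    (linearIndependent_indicator_Ici R).comp _ Subtype.val_injective
  rw [finrank_map_eq_of_forall_mem hker, map_cubeEval_homogeneousSubmodule,
    finrank_span_eq_card hindep, card_finset_card_le]

end HilbertFunction

theorem stmt18_general (R : Type*) [CommRing R] [Nontrivial R] (n : ℕ) :
    RingTheory.Sequence.IsRegular (MvPolynomial (Option (Fin n)) R)
      (List.ofFn (booleanRelation R (ι := Fin n))) ∧
    ∀ j : ℕ,
      Module.finrank R
        ((homogeneousSubmodule (Option (Fin n)) R j).map
          (Ideal.Quotient.mkₐ R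
            (Ideal.span (Set.range (booleanRelation R (ι := Fin n))))).toLinearMap) =
      ∑ ν ∈ Finset.range (min j n + 1), n.choose ν := by
  refine ⟨?_, fun j => ?_⟩
  · rw [List.ofFn_eq_map]
    exact isRegular_map_booleanRelation (List.nodup_finRange n)
  · simpa using finrank_map_mk_homogeneousSubmodule (R := R) (ι := Fin n) j

/-- In `R = ℚ[x₁,…,x_{m−1},y]` the elements `y·x_i − x_i²`
form a regular sequence, and the quotient by the ideal they generate has
Hilbert series `(1+t)^{m−1}/(1−t)`: its degree-`j` component has dimension
`Σ_{ν=0}^{min(j,m−1)} C(m−1,ν)`. -/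
theorem stmt18 (m : ℕ) (hm : 2 ≤ m) :
    RingTheory.Sequence.IsRegular (Rring m) (List.ofFn (relElt m)) ∧
    ∀ j : ℕ,
      Module.finrank ℚ
        (Submodule.map
          (Ideal.Quotient.mkₐ ℚ (Ideal.span (Set.range (relElt m)))).toLinearMap
          (MvPolynomial.homogeneousSubmodule (Option (Fin (m - 1))) ℚ j)) =
      ∑ ν ∈ Finset.range (min j (m - 1) + 1), Nat.choose (m - 1) ν :=
  stmt18_general ℚ (m - 1)
end

section
/- Let 1 ≤ n ≤ r and A := ℚ[y₁,…,y_n]. Define β_j^{(ν)} ∈ A for 1 ≤ j ≤ n and ν ≥ 0 by β_j^{(ν)} := δ_{j, n−ν} (Kronecker delta) for 0 ≤ ν ≤ n−1 and β_j^{(ν)} := Σ_{i=1}^{n} (−1)^{i−1} y_i · β_j^{(ν−i)} for ν ≥ n. Let c(t) := 1 + y₁t + … + y_n tⁿ ∈ A[[t]] and write c(t)^{−1} = Σ_{ν≥0} δ_ν t^ν with δ_ν ∈ A. Then the ideals of A generated by these families coincide: (β₁^{(r)}, …, β_n^{(r)}) = (δ_{r−n+1}, …, δ_r). -/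
/-!
Both families solve the same linear recurrence, that of the powers of a root of
`sⁿ = Σ (−1)^{i−1} y_i s^{n−i}`. The `β_j` are, in reverse order, its fundamental solutions, and
every solution `w` satisfies `w (i + r) = Σ_k w (i + k) · b_k r` with `b_k` the fundamental solution
for the `k`-th unit vector. Since `c(−t)` is the reversed characteristic polynomial, the
coefficients of `c(−t)⁻¹`, shifted to begin with `0, …, 0, 1`, form a solution `w`. For this `w` the
Hankel matrix `(w (i + k))` of size `n` is unimodular: it vanishes above the antidiagonal, where it
is `1`.
-/

open MvPolynomial

/-- The coefficients `β_j^{(ν)} ∈ A = ℚ[y₁,…,y_n]` (here `y_{i+1} = X i` and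
`β_j^{(ν)} = beta n ν j` with `j` 0-indexed): `β_j^{(ν)} = δ_{j,n−ν}` for
`0 ≤ ν ≤ n−1`, and `β_j^{(ν)} = Σ_{i=1}^n (−1)^{i−1} y_i β_j^{(ν−i)}` for `ν ≥ n`. -/
noncomputable def betaCoeff (n : ℕ) (ν : ℕ) : Fin n → MvPolynomial (Fin n) ℚ :=
  if ν < n then fun j => if (j : ℕ) + 1 + ν = n then 1 else 0
  else fun j => ∑ i : Fin n,
    ((-1 : ℚ) ^ (i : ℕ)) • (X i * betaCoeff n (ν - ((i : ℕ) + 1)) j)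
termination_by ν
decreasing_by
  rename_i h
  have := i.isLt
  omega

/-- The power series `c(t) = 1 + y₁ t + … + y_n tⁿ`. -/
noncomputable def cSeries (n : ℕ) : PowerSeries (MvPolynomial (Fin n) ℚ) :=
  PowerSeries.mk fun ν =>
    if h : 1 ≤ ν ∧ ν ≤ n then X (⟨ν - 1, by omega⟩ : Fin n)
    else if ν = 0 then 1 else 0

section Span

variable {R : Type*} {m n : Type*} [Fintype n]

theorem span_range_mulVec_le [CommSemiring R] (M : Matrix m n R) (v : n → R) :
    Ideal.span (Set.range (M.mulVec v)) ≤ Ideal.span (Set.range v) := by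
  rw [Ideal.span_le]
  rintro _ ⟨i, rfl⟩
  exact Ideal.sum_mem _ fun j _ => Ideal.mul_mem_left _ _ (Ideal.subset_span ⟨j, rfl⟩)

theorem span_range_mulVec_of_isUnit_det [CommRing R] [DecidableEq n] {M : Matrix n n R}
    (hM : IsUnit M.det) (v : n → R) :
    Ideal.span (Set.range (M.mulVec v)) = Ideal.span (Set.range v) := by
  refine (span_range_mulVec_le M v).antisymm ?_
  have hv : M⁻¹.mulVec (M.mulVec v) = v := by
    rw [Matrix.mulVec_mulVec, Matrix.nonsing_inv_mul M hM, Matrix.one_mulVec]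
  simpa only [hv] using span_range_mulVec_le M⁻¹ (M.mulVec v)

theorem span_range_mul_of_isUnit [CommSemiring R] {ι : Type*} {a : ι → R}
    (ha : ∀ i, IsUnit (a i)) (v : ι → R) :
    Ideal.span (Set.range fun i => a i * v i) = Ideal.span (Set.range v) := by
  simp only [Ideal.span_range_eq_iSup, Ideal.span_singleton_mul_left_unit (ha _)]

end Span

section Solutions

variable {R : Type*} [CommSemiring R] {E : LinearRecurrence R} {u : ℕ → R}

theorem isSolution_add_left (hu : E.IsSolution u) (m : ℕ) :
    E.IsSolution fun v => u (m + v) := fun v => by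
  simpa only [add_assoc] using hu (m + v)

theorem eq_sum_mul_basis (hu : E.IsSolution u) (v : ℕ) :
    u v = ∑ j : Fin E.order, u j * (E.basis j : ℕ → R) v := by
  have h := congrArg (fun s : E.solSpace => (s : ℕ → R) v) (E.basis.sum_repr ⟨u, hu⟩)
  simpa using h.symm

theorem eq_basis_of_initial_eq_ite (hu : E.IsSolution u) {j : Fin E.order}
    (h : ∀ i : Fin E.order, u i = if i = j then 1 else 0) : u = E.basis j := by
  suffices (⟨u, hu⟩ : E.solSpace) = E.basis j from congrArg Subtype.val this
  apply E.basis.repr.injective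
  ext i
  simp [h, Finsupp.single_apply, eq_comm]

end Solutions

section Impulse

variable {R : Type*} [CommRing R] {E : LinearRecurrence R} {w : ℕ → R}

theorem det_hankel_rev_eq_one {n : ℕ} (h₀ : ∀ v, v + 1 < n → w v = 0)
    (h₁ : ∀ v, v + 1 = n → w v = 1) :
    (Matrix.of fun i k : Fin n => w (i + k.rev)).det = 1 := by
  rw [Matrix.det_of_isLowerTriangular]
  · exact Finset.prod_eq_one fun i _ => h₁ _ (by grind)
  · intro i k (hik : i < k)
    exact h₀ _ (by grind)

theorem span_range_basis_eq_span_range_add (hw : E.IsSolution w)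
    (h₀ : ∀ v, v + 1 < E.order → w v = 0) (h₁ : ∀ v, v + 1 = E.order → w v = 1) (r : ℕ) :
    Ideal.span (Set.range fun j : Fin E.order => (E.basis j : ℕ → R) r) =
      Ideal.span (Set.range fun i : Fin E.order => w (i + r)) := by
  set b : Fin E.order → R := fun j => (E.basis j : ℕ → R) r
  set M : Matrix (Fin E.order) (Fin E.order) R := Matrix.of fun i k => w (i + k.rev)
  have hM : IsUnit M.det := det_hankel_rev_eq_one h₀ h₁ ▸ isUnit_one
  have hMb : M.mulVec (b ∘ Fin.rev) = fun i : Fin E.order => w (i + r) := by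
    ext i
    rw [eq_sum_mul_basis (isSolution_add_left hw i) r]
    exact Equiv.sum_comp Fin.revPerm fun j : Fin E.order => w (i + j) * b j
  rw [← hMb, span_range_mulVec_of_isUnit_det hM, Fin.rev_surjective.range_comp]

end Impulse

section GeneratingSeries

open scoped PowerSeries

variable {R : Type*} [CommRing R]

/-- The reversed characteristic polynomial `X ^ d * χ (1 / X)` of a recurrence of order `d` with
characteristic polynomial `χ`, as a power series so that it can be inverted. -/
noncomputable def reverseCharSeries (E : LinearRecurrence R) : R⟦X⟧ :=
  1 - ∑ i : Fin E.order, PowerSeries.C (E.coeffs i) * PowerSeries.X ^ (E.order - i : ℕ)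

theorem constantCoeff_reverseCharSeries (E : LinearRecurrence R) :
    PowerSeries.constantCoeff (reverseCharSeries E) = 1 := by
  have h (i : Fin E.order) : E.order - (i : ℕ) ≠ 0 := by lia
  simp [reverseCharSeries, h]

variable {E : LinearRecurrence R} {g : R⟦X⟧}

theorem isSolution_coeff_X_pow_mul (hg : reverseCharSeries E * g = 1) :
    E.IsSolution fun v => PowerSeries.coeff (v + 1) (PowerSeries.X ^ E.order * g) := by
  intro v
  set p : R⟦X⟧ := PowerSeries.X ^ E.order * g
  have hp_rec : p = PowerSeries.X ^ E.order + ∑ i : Fin E.order,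
      PowerSeries.C (E.coeffs i) * (PowerSeries.X ^ (E.order - i : ℕ) * p) := by
    simp only [← mul_assoc, ← Finset.sum_mul]
    rw [reverseCharSeries] at hg
    linear_combination PowerSeries.X ^ E.order * hg
  have hcoeff (i : Fin E.order) :
      PowerSeries.coeff (v + E.order + 1) (PowerSeries.X ^ (E.order - i : ℕ) * p) =
        PowerSeries.coeff (v + i + 1) p := by
    rw [show v + E.order + 1 = v + i + 1 + (E.order - i) by lia, PowerSeries.coeff_X_pow_mul]
  calc PowerSeries.coeff (v + E.order + 1) p
      = PowerSeries.coeff (v + E.order + 1) (PowerSeries.X ^ E.order : R⟦X⟧) +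
          ∑ i : Fin E.order, E.coeffs i * PowerSeries.coeff (v + i + 1) p := by
        conv_lhs => rw [hp_rec]
        simp only [map_add, map_sum, PowerSeries.coeff_C_mul, hcoeff]
    _ = ∑ i : Fin E.order, E.coeffs i * PowerSeries.coeff (v + i + 1) p := by
        rw [PowerSeries.coeff_X_pow, if_neg (by lia), zero_add]

theorem span_range_basis_eq_span_range_coeff (hg : reverseCharSeries E * g = 1)
    {r : ℕ} (hr : E.order ≤ r + 1) :
    Ideal.span (Set.range fun j : Fin E.order => (E.basis j : ℕ → R) r) =
      Ideal.span (Set.range fun i : Fin E.order => PowerSeries.coeff (r + 1 - E.order + i) g) := by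
  have hg₀ : PowerSeries.coeff 0 g = 1 := by
    simpa [constantCoeff_reverseCharSeries] using congrArg PowerSeries.constantCoeff hg
  rw [span_range_basis_eq_span_range_add (isSolution_coeff_X_pow_mul hg)]
  · congr! 3 with i
    rw [PowerSeries.coeff_X_pow_mul', if_pos (by lia)]
    congr 2
    lia
  · intro v hv
    rw [PowerSeries.coeff_X_pow_mul', if_neg (by lia)]
  · intro v hv
    rw [PowerSeries.coeff_X_pow_mul', if_pos hv.ge, hv, Nat.sub_self, hg₀]

end GeneratingSeries

section SignedRecurrence

theorem rescale_C_mul_X_pow {R : Type*} [CommSemiring R] (a b : R) (k : ℕ) :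
    PowerSeries.rescale a (PowerSeries.C b * PowerSeries.X ^ k) =
      PowerSeries.C (a ^ k * b) * PowerSeries.X ^ k := by
  ext v
  simp only [PowerSeries.coeff_rescale, PowerSeries.coeff_C_mul_X_pow]
  split_ifs with hv <;> simp [hv]

variable {R : Type*} [CommRing R] {n : ℕ}

/-- The recurrence `u (v + n) = ∑ i, (-1) ^ i * y i * u (v + n - (i + 1))` satisfied by the powers
of a root of `sⁿ = Σ_{i=1}^n (−1)^{i−1} y_i s^{n−i}`. `LinearRecurrence` lists the coefficients
from the oldest term on, hence the reversal. -/
abbrev signedRecurrence (y : Fin n → R) : LinearRecurrence R where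
  order := n
  coeffs i := (-1) ^ (i.rev : ℕ) * y i.rev

theorem isSolution_signedRecurrence_iff {y : Fin n → R} {u : ℕ → R} :
    (signedRecurrence y).IsSolution u ↔
      ∀ v, u (v + n) = ∑ i : Fin n, (-1) ^ (i : ℕ) * (y i * u (v + n - (i + 1))) := by
  refine forall_congr' fun v => Eq.congr_right ?_
  rw [← Equiv.sum_comp Fin.revPerm]
  refine Finset.sum_congr rfl fun i _ => ?_
  simp only [Fin.revPerm_apply, Fin.rev_rev, mul_assoc]
  congr 4
  grind

theorem rescale_neg_one_one_add_sum (y : Fin n → R) :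
    PowerSeries.rescale (-1)
        (1 + ∑ i : Fin n, PowerSeries.C (y i) * PowerSeries.X ^ (i + 1 : ℕ)) =
      reverseCharSeries (signedRecurrence y) := by
  rw [reverseCharSeries, sub_eq_add_neg, map_add, map_one, map_sum, ← Finset.sum_neg_distrib,
    ← Equiv.sum_comp Fin.revPerm]
  congr! 2 with i
  have hi : n - i = i.rev + 1 := by grind
  rw [rescale_C_mul_X_pow, hi, Fin.revPerm_apply, pow_succ, mul_neg_one, neg_mul, map_neg, neg_mul]

theorem stmt19_general {r : ℕ} (hr : n ≤ r + 1) (y : Fin n → R) {δ : ℕ → R}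
    (hδ : (1 + ∑ i : Fin n, PowerSeries.C (y i) * PowerSeries.X ^ (i + 1 : ℕ)) *
      PowerSeries.mk δ = 1) :
    Ideal.span (Set.range fun j : Fin n => ((signedRecurrence y).basis j : ℕ → R) r) =
      Ideal.span (Set.range fun j : Fin n => δ (r + 1 - n + j)) := by
  have hg := congrArg (PowerSeries.rescale (-1)) hδ
  rw [map_mul, map_one, rescale_neg_one_one_add_sum] at hg
  refine (span_range_basis_eq_span_range_coeff (E := signedRecurrence y) hg hr).trans ?_
  simp only [PowerSeries.coeff_rescale, PowerSeries.coeff_mk]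
  exact span_range_mul_of_isUnit (fun i => isUnit_one.neg.pow _) _

end SignedRecurrence

theorem betaCoeff_eq_basis (n : ℕ) (j : Fin n) :
    (fun v => betaCoeff n v j) =
      ((signedRecurrence (X : Fin n → MvPolynomial (Fin n) ℚ)).basis j.rev : ℕ → _) := by
  refine eq_basis_of_initial_eq_ite (isSolution_signedRecurrence_iff.mpr fun v => ?_) fun i => ?_
  · rw [betaCoeff, if_neg (by lia)]
    simp [Algebra.smul_def]
  · rw [betaCoeff, if_pos i.isLt]
    congr 1
    grind

theorem range_betaCoeff (n r : ℕ) :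
    Set.range (betaCoeff n r) = Set.range fun j : Fin n =>
      ((signedRecurrence (X : Fin n → MvPolynomial (Fin n) ℚ)).basis j : ℕ → _) r := by
  rw [← Fin.rev_surjective.range_comp]
  congr 1 with j : 1
  simpa only [Function.comp_apply, Fin.rev_rev] using congrFun (betaCoeff_eq_basis n j.rev) r

theorem cSeries_eq_one_add_sum (n : ℕ) :
    cSeries n = 1 + ∑ i : Fin n, PowerSeries.C (X i) * PowerSeries.X ^ (i + 1 : ℕ) := by
  ext1 v
  simp only [cSeries, PowerSeries.coeff_mk, map_add, map_sum, PowerSeries.coeff_one,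
    PowerSeries.coeff_C_mul_X_pow]
  rcases v with _ | v
  · simp
  by_cases hv : v < n
  · have h (i : Fin n) : v = i ↔ ⟨v, hv⟩ = i := by grind
    simp [hv, h]
  · have h (i : Fin n) : v ≠ i := by lia
    simp [hv, h]

/-- Writing `c(t)^{−1} = Σ_ν δ_ν t^ν`, the ideal of
`A = ℚ[y₁,…,y_n]` generated by `β₁^{(r)},…,β_n^{(r)}` coincides with the ideal
generated by `δ_{r−n+1},…,δ_r`. -/
theorem stmt19 (n r : ℕ) (hn : 1 ≤ n) (hnr : n ≤ r)
    (δc : ℕ → MvPolynomial (Fin n) ℚ)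
    (hδ : cSeries n * PowerSeries.mk δc = 1) :
    Ideal.span (Set.range (betaCoeff n r)) =
      Ideal.span (Set.range fun j : Fin n => δc (r - n + 1 + (j : ℕ))) := by
  rw [range_betaCoeff, stmt19_general (by lia) X (cSeries_eq_one_add_sum n ▸ hδ),
    Nat.sub_add_comm hnr]
end
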